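/- Let η > 0, let the constraint graph of ψ be d-regular with OPT(ψ) < 1 − η, and let constants satisfy: ε₀ > 0, ε₁ ≥ 5ε₀, ε₅ ∈ (0, η/2) with ((log₂ e)/8)·ε₅⁴ > 14ε₁, ε₆ = (η/2 − ε₅)·(1/|A|²)·(1−ε₅)⁴/(1+ε₅)², ε₇ = 6ε₅ + c·ε₅² (c the absolute constant from the second-moment bound for I(u,v)), and δ < ε₆²/(d⁴·(1+2ε₇)). Then for all sufficiently large n, in the setup: if Σ_{i=1}^n H(X_i | X_1,…,X_{i−1}, Y_1,…,Y_{i−1}) ≥ (1 − 6ε₁/log₂ n)·log₂ k, then den(S) < 1 − δ. -/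

import Mathlib

/-!
Write `p = ρ / n` and `q_i(w) = Pr[X_i = 1 | W_{i-1} = w]`, so that `∑ i, E q_i = ρ`.

*Entropy.* The tangent line of binary entropy at `p` gives `h(q) ≤ h(p) + h'(p) (q - p) - D`, where
`D = q log (q / p) - q + p` is at least `p ε₅² / 4` when `q` is off from `p` by a factor outside
`1 ± ε₅` (`ent_le`, `phi_lower`). Summing over `i`, the linear terms cancel and `n h(p)` exceeds
`log k` by at most `log (n + 1) = o(ρ)`, because the binomial distribution with parameters `n`, `p`
has its mode at `ρ` (`log_choose_lower`). The entropy hypothesis therefore bounds the expected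
number of atypical prefixes, and at most `ε₅ n` variables are atypical (`card_atypical_le`).

*First moment.* Let `τ i` be the most frequent label of `i` among the vertices that choose `i` after
a typical prefix. Since `OPT(ψ) < 1 - η`, the assignment `τ` violates at least `(η - 2 ε₅) n d`
ordered constraint pairs between typical variables (`card_bad_ge`), and each is tested, with the
labels of `τ` on both sides, by at least a `((1 - ε₅)² p / |A|)²` fraction of the pairs `(u, v)`.

*Second moment.* With `P = (1 + ε₅) p`, the events "`u` chooses `i` after a typical prefix" have
probability at most `P` and pairwise correlations at most `P²`, so the number of tests between `u`
and `v` has second moment at most `2 n² d² P⁴` for large `n` (`second_moment`).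

By Cauchy–Schwarz a fraction at least `2 ε₆²` of the pairs contains a violated test, and such pairs
are not adjacent (`den_le`). This exceeds `δ`, whatever positive constant `c` is used in `ε₇`.
-/

open Classical Finset

noncomputable section

/-- Binary entropy function (base 2). -/
def binEnt (p : ℝ) : ℝ := -(p * Real.logb 2 p) - (1 - p) * Real.logb 2 (1 - p)

/-- Entropy (base 2) of the random variable `f` under the uniform distribution on `S`. -/
def fEnt {V B : Type*} [Fintype B] (S : Finset V) (f : V → B) : ℝ :=
  ∑ b : B,
    -((((S.filter fun v => f v = b).card : ℝ) / (S.card : ℝ)) *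
      Real.logb 2 (((S.filter fun v => f v = b).card : ℝ) / (S.card : ℝ)))

/-- Conditional entropy `H(f | g)` under the uniform distribution on `S`. -/
def cEnt {V B C : Type*} [Fintype B] [Fintype C] (S : Finset V) (f : V → B) (g : V → C) : ℝ :=
  ∑ c : C, (((S.filter fun v => g v = c).card : ℝ) / (S.card : ℝ)) *
      fEnt (S.filter fun v => g v = c) f

/-- Probability of the event `P` under the uniform distribution on `S`. -/
def prS {V : Type*} (S : Finset V) (P : V → Prop) : ℝ :=
  ((S.filter P).card : ℝ) / (S.card : ℝ)

/-- A 2CSP instance on `n` variables over alphabet `A`: an undirected constraint graph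
together with a relation on each constraint edge. -/
structure CSP (n : ℕ) (A : Type*) where
  adj : Fin n → Fin n → Prop
  symm : ∀ {i j}, adj i j → adj j i
  irrefl : ∀ i, ¬ adj i i
  rel : Fin n → Fin n → A → A → Prop
  rel_symm : ∀ i j a b, rel i j a b ↔ rel j i b a

/-- ρ = ⌈√n · log log n⌉. -/
def rho (n : ℕ) : ℕ := ⌈Real.sqrt n * Real.logb 2 (Real.logb 2 n)⌉₊

/-- k = C(n, ρ). -/
def kk (n : ℕ) : ℕ := n.choose (rho n)

/-- N = C(n,ρ)·|A|^ρ, the number of vertices of the product graph. -/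
def NN (n a : ℕ) : ℕ := n.choose (rho n) * a ^ (rho n)

/-- k' = k · N^(−ε₀ / log log N). -/
def kprime (n a : ℕ) (ε₀ : ℝ) : ℝ :=
  (kk n : ℝ) * (NN n a : ℝ) ^ (-(ε₀ / Real.logb 2 (Real.logb 2 (NN n a))))

/-- Vertices of the product graph: pairs (T, y) with T ⊆ {1,…,n}, |T| = ρ, y : T → A. -/
abbrev Vtx (n ρ : ℕ) (A : Type*) := Σ T : {T : Finset (Fin n) // T.card = ρ}, (↥T.1 → A)

variable {n ρ : ℕ} {A : Type*} [Fintype A] [DecidableEq A]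

/-- X_i : indicator of the event that variable i is chosen by vertex v. -/
def Xb (v : Vtx n ρ A) (i : Fin n) : Bool := decide (i ∈ v.1.1)

/-- Y_i : value of vertex v on variable i (default a₀ if i is not chosen). -/
def Yv (a₀ : A) (v : Vtx n ρ A) (i : Fin n) : A :=
  if h : i ∈ v.1.1 then v.2 ⟨i, h⟩ else a₀

/-- Type of prefix values: (X₁,…,X_{i},Y₁,…,Y_{i}) padded with defaults. -/
abbrev Pfx (n : ℕ) (A : Type*) := (Fin n → Bool) × (Fin n → A)

/-- W_{i-1} : the prefix of v consisting of (X_j, Y_j) for j < i (0-indexed cutoff i). -/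
def Wp (a₀ : A) (i : ℕ) (v : Vtx n ρ A) : Pfx n A :=
  (fun j => if (j : ℕ) < i then Xb v j else false,
   fun j => if (j : ℕ) < i then Yv a₀ v j else a₀)

/-- q_i = Pr[X_i = 1]. -/
def qi (S : Finset (Vtx n ρ A)) (i : Fin n) : ℝ := prS S (fun v => Xb v i = true)

/-- Pr[w_{i-1}] : probability of the prefix value w. -/
def prW (a₀ : A) (S : Finset (Vtx n ρ A)) (i : ℕ) (w : Pfx n A) : ℝ :=
  prS S (fun v => Wp a₀ i v = w)

/-- q_i(w_{i-1}) = Pr[X_i = 1 | W_{i-1} = w]. -/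
def qiW (a₀ : A) (S : Finset (Vtx n ρ A)) (i : Fin n) (w : Pfx n A) : ℝ :=
  prS (S.filter fun v => Wp a₀ (i : ℕ) v = w) (fun v => Xb v i = true)

/-- α_i = H(X_i | W_{i-1}). -/
def alphaE (a₀ : A) (S : Finset (Vtx n ρ A)) (i : Fin n) : ℝ :=
  cEnt S (fun v => Xb v i) (Wp a₀ (i : ℕ))

/-- β_i = H(Y_i | W_{i-1}, X_i). -/
def betaE (a₀ : A) (S : Finset (Vtx n ρ A)) (i : Fin n) : ℝ :=
  cEnt S (fun v => Yv a₀ v i) (fun v => (Wp a₀ (i : ℕ) v, Xb v i))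

/-- β_i(w_{i-1}) = H(Y_i | X_i, W_{i-1} = w). -/
def betaW (a₀ : A) (S : Finset (Vtx n ρ A)) (i : Fin n) (w : Pfx n A) : ℝ :=
  cEnt (S.filter fun v => Wp a₀ (i : ℕ) v = w) (fun v => Yv a₀ v i) (fun v => Xb v i)

/-- A good index: α_i ≥ H(q_i) − 2q_i·log|A| and β_i ≥ (1/2)ε₁q_i. -/
def GoodIdx (a₀ : A) (S : Finset (Vtx n ρ A)) (ε₁ : ℝ) (i : Fin n) : Prop :=
  alphaE a₀ S i ≥ binEnt (qi S i) - 2 * qi S i * Real.logb 2 (Fintype.card A) ∧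
  betaE a₀ S i ≥ (1 / 2) * ε₁ * qi S i

/-- Neighborhood relation of the i-th prefix graph (self-loops included): two prefixes are
neighbors iff wherever both choose a variable j < i they assign it the same label. -/
def PfxNbr (n : ℕ) (A : Type*) (i : ℕ) (w σ' : Pfx n A) : Prop :=
  ∀ j : Fin n, (j : ℕ) < i → w.1 j = true → σ'.1 j = true → w.2 j = σ'.2 j

/-- A good prefix. -/
def GoodPfx (a₀ : A) (S : Finset (Vtx n ρ A)) (ε₁ ε₂ ε₃ : ℝ) (i : Fin n) (w : Pfx n A) : Prop :=
  GoodIdx a₀ S ε₁ i ∧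
  (∑ σ' : Pfx n A, if PfxNbr n A (i : ℕ) w σ' then prW a₀ S (i : ℕ) σ' * qiW a₀ S i σ' else 0)
      ≥ (1 - ε₂) * qi S i ∧
  betaW a₀ S i w ≥ ε₃ * qiW a₀ S i w

/-- A vertex violating an internal 2CSP constraint (an isolated vertex). -/
def Violates (ψ : CSP n A) (v : Vtx n ρ A) : Prop :=
  ∃ i j, ∃ (hi : i ∈ v.1.1) (hj : j ∈ v.1.1),
    ψ.adj i j ∧ ¬ ψ.rel i j (v.2 ⟨i, hi⟩) (v.2 ⟨j, hj⟩)

/-- Adjacency in the product graph G_ψ: both endpoints are non-isolated, they agree on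
common variables, and all cross 2CSP constraints are satisfied. -/
def PAdj (ψ : CSP n A) (u v : Vtx n ρ A) : Prop :=
  ¬ Violates ψ u ∧ ¬ Violates ψ v ∧
  (∀ i, ∀ (hu : i ∈ u.1.1) (hv : i ∈ v.1.1), u.2 ⟨i, hu⟩ = v.2 ⟨i, hv⟩) ∧
  (∀ i j, ∀ (hu : i ∈ u.1.1) (hv : j ∈ v.1.1), ψ.adj i j → ψ.rel i j (u.2 ⟨i, hu⟩) (v.2 ⟨j, hv⟩))

/-- den(S) : the edge density of S in the product graph. -/
def den (ψ : CSP n A) (S : Finset (Vtx n ρ A)) : ℝ :=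
  (((S ×ˢ S).filter fun p => PAdj ψ p.1 p.2).card : ℝ) / ((S.card : ℝ) ^ 2)

/-- den(G_{i+1}) : weighted density of the prefix graph with cutoff i. -/
def pfxDen (a₀ : A) (S : Finset (Vtx n ρ A)) (i : ℕ) : ℝ :=
  ∑ w : Pfx n A, ∑ σ' : Pfx n A,
    if PfxNbr n A i w σ' then prW a₀ S i w * prW a₀ S i σ' else 0

/-- Number of (ordered) satisfied constraint pairs for assignment τ. -/
def nSat (ψ : CSP n A) (τ : Fin n → A) : ℕ :=
  ((univ ×ˢ univ : Finset (Fin n × Fin n)).filter fun p =>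
    ψ.adj p.1 p.2 ∧ ψ.rel p.1 p.2 (τ p.1) (τ p.2)).card

/-- Number of (ordered) constraint pairs. -/
def nEdg (ψ : CSP n A) : ℕ :=
  ((univ ×ˢ univ : Finset (Fin n × Fin n)).filter fun p => ψ.adj p.1 p.2).card

/-- The constraint graph is d-regular. -/
def Regular (ψ : CSP n A) (d : ℕ) : Prop :=
  ∀ i, ((univ : Finset (Fin n)).filter fun j => ψ.adj i j).card = d

/-- A typical prefix: (1−ε₅)ρ/n < q_i(w) < (1+ε₅)ρ/n. -/
def TypPfx (a₀ : A) (S : Finset (Vtx n ρ A)) (ε₅ : ℝ) (i : Fin n) (w : Pfx n A) : Prop :=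
  (1 - ε₅) * ((ρ : ℝ) / (n : ℝ)) < qiW a₀ S i w ∧ qiW a₀ S i w < (1 + ε₅) * ((ρ : ℝ) / (n : ℝ))

/-- A typical variable: typical prefixes have total probability at least 1−ε₅. -/
def TypVar (a₀ : A) (S : Finset (Vtx n ρ A)) (ε₅ : ℝ) (i : Fin n) : Prop :=
  (∑ w : Pfx n A, if TypPfx a₀ S ε₅ i w then prW a₀ S (i : ℕ) w else 0) ≥ 1 - ε₅

/-- I(u,v) : the number of tests between u and v (ordered pairs (i,j) forming a constraint
edge between typical variables, chosen with typical prefixes by u, v respectively). -/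
def Icnt (ψ : CSP n A) (a₀ : A) (S : Finset (Vtx n ρ A)) (ε₅ : ℝ) (u v : Vtx n ρ A) : ℕ :=
  ((univ ×ˢ univ : Finset (Fin n × Fin n)).filter fun p =>
    ψ.adj p.1 p.2 ∧ TypVar a₀ S ε₅ p.1 ∧ TypVar a₀ S ε₅ p.2 ∧
    Xb u p.1 = true ∧ Xb v p.2 = true ∧
    TypPfx a₀ S ε₅ p.1 (Wp a₀ (p.1 : ℕ) u) ∧ TypPfx a₀ S ε₅ p.2 (Wp a₀ (p.2 : ℕ) v)).card

/-- I^T(i,j) : the number of tests of the constraint (i,j) over pairs of S. -/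
def ITop (a₀ : A) (S : Finset (Vtx n ρ A)) (ε₅ : ℝ) (i j : Fin n) : ℕ :=
  ((S ×ˢ S).filter fun p =>
    Xb p.1 i = true ∧ Xb p.2 j = true ∧
    TypPfx a₀ S ε₅ i (Wp a₀ (i : ℕ) p.1) ∧ TypPfx a₀ S ε₅ j (Wp a₀ (j : ℕ) p.2)).card

/-- E_{u,v}[I(u,v)] for u,v independent uniform on S. -/
def EI (ψ : CSP n A) (a₀ : A) (S : Finset (Vtx n ρ A)) (ε₅ : ℝ) : ℝ :=
  (∑ u ∈ S, ∑ v ∈ S, (Icnt ψ a₀ S ε₅ u v : ℝ)) / ((S.card : ℝ) ^ 2)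

/-- E_{u,v}[I(u,v)²] for u,v independent uniform on S. -/
def EI2 (ψ : CSP n A) (a₀ : A) (S : Finset (Vtx n ρ A)) (ε₅ : ℝ) : ℝ :=
  (∑ u ∈ S, ∑ v ∈ S, (Icnt ψ a₀ S ε₅ u v : ℝ) ^ 2) / ((S.card : ℝ) ^ 2)

end

/-! ### Averages over a finite set -/

/-- Tower property: for a weight `G` that depends only on `g`, the indicator of `P` may be replaced
by its conditional probability given `g`. -/
theorem tower_sum {V C : Type*} (S : Finset V) (g : V → C) (P : V → Prop) (G : V → ℝ)
    (hG : ∀ v v', g v = g v' → G v = G v') :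
    ∑ v ∈ S, G v * (if P v then 1 else 0) =
      ∑ v ∈ S, G v * prS (S.filter fun v' => g v' = g v) P := by
  have h1 : ∀ v ∈ S, G v * prS (S.filter fun v' => g v' = g v) P =
      ∑ v' ∈ S, if g v' = g v then
        G v' * (if P v' then 1 else 0) / ((S.filter fun w => g w = g v').card : ℝ) else 0 := by
    intro v hv
    rw [← Finset.sum_filter]
    rw [Finset.sum_congr rfl (g := fun v' => G v / ((S.filter fun w => g w = g v).card : ℝ) *
      (if P v' then 1 else 0))]
    · rw [← Finset.mul_sum, Finset.sum_boole, prS]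
      ring
    · intro v' hv'
      have := (Finset.mem_filter.1 hv').2
      rw [hG v' v this, this]
      ring
  rw [Finset.sum_congr rfl h1, Finset.sum_comm]
  refine Finset.sum_congr rfl fun v' hv' => ?_
  rw [← Finset.sum_filter, Finset.sum_const, nsmul_eq_mul]
  have h2 : (S.filter fun v => g v' = g v) = S.filter fun w => g w = g v' := by
    ext w; simp [eq_comm]
  have h3 : ((S.filter fun w => g w = g v').card : ℝ) ≠ 0 := by
    have : v' ∈ S.filter fun w => g w = g v' := by simp [hv']
    exact_mod_cast (Finset.card_pos.2 ⟨v', this⟩).ne'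
  rw [h2]
  field_simp

/-- The expectation of `F ∘ g`, computed from the distribution of `g` or directly. -/
theorem fiber_avg {V C : Type*} [Fintype C] (S : Finset V) (g : V → C) (F : C → ℝ) :
    ∑ c : C, (((S.filter fun v => g v = c).card : ℝ) / (S.card : ℝ)) * F c =
      (∑ v ∈ S, F (g v)) / S.card := by
  rw [← Finset.sum_fiberwise S g, Finset.sum_div]
  refine Finset.sum_congr rfl fun c _ => ?_
  rw [Finset.sum_congr rfl (g := fun _ => F c)]
  · rw [Finset.sum_const, nsmul_eq_mul]; ring
  · intro v hv; rw [(Finset.mem_filter.1 hv).2]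

/-- The entropy of a Boolean variable in nats, as the natural-log binary entropy of its bias. -/
theorem fEnt_bool {V : Type*} (S : Finset V) (hS : S.Nonempty) (f : V → Bool) :
    fEnt S f * Real.log 2 = Real.negMulLog (prS S fun v => f v = true) +
      Real.negMulLog (1 - prS S fun v => f v = true) := by
  have hs : (S.card : ℝ) ≠ 0 := by exact_mod_cast (Finset.card_pos.2 hS).ne'
  have h1 : (1 - prS S fun v => f v = true) = prS S fun v => f v = false := by
    have : (S.filter fun v => f v = true).card + (S.filter fun v => ¬ f v = true).card = S.card :=
      Finset.card_filter_add_card_filter_not _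
    simp only [Bool.not_eq_true] at this
    have h : ((S.filter fun v => f v = true).card : ℝ) + (S.filter fun v => f v = false).card
        = S.card := by exact_mod_cast this
    simp only [prS]
    rw [sub_eq_iff_eq_add, ← add_div, eq_comm, div_eq_one_iff_eq hs, ← h, add_comm]
    congr!
  have h2 : Real.log 2 ≠ 0 := (Real.log_pos (by norm_num)).ne'
  rw [h1, fEnt, Fintype.sum_bool]
  simp only [prS, Real.negMulLog, Real.logb]
  field_simp

/-! ### Divergence bounds -/

/-- The Poisson divergence `q log (q / p) - q + p` is nonnegative. -/
theorem gibbs_nonneg {p q : ℝ} (hp : 0 < p) (hq : 0 ≤ q) :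
    0 ≤ q * Real.log q - q * Real.log p - q + p := by
  rcases eq_or_lt_of_le hq with rfl | hq
  · simp; linarith
  · rw [← mul_sub]
    have := Real.log_le_sub_one_of_pos (div_pos hp hq)
    rw [Real.log_div hp.ne' hq.ne'] at this
    have h3 := mul_le_mul_of_nonneg_left this hq.le
    have h4 : q * (p / q - 1) = p - q := by field_simp
    linarith

/-- If `q` is off from `p` by a relative error of at least `ε`, then the Poisson divergence is at
least `p ε² / 4`: by convexity in `q` it suffices to evaluate it at `q = (1 ± ε) p`. -/
theorem phi_lower {p q ε : ℝ} (hp : 0 < p) (hq : 0 ≤ q) (hε : 0 < ε) (hε1 : ε < 1 / 2)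
    (h : ¬ ((1 - ε) * p < q ∧ q < (1 + ε) * p)) :
    p * ε ^ 2 / 4 ≤ q * Real.log q - q * Real.log p - q + p := by
  -- the tangent line at `t * p` reduces the claim to the value of the divergence there
  have step : ∀ t : ℝ, 0 < t → t * p * Real.log t ≤ q * Real.log t →
      ε ^ 2 / 4 ≤ t * Real.log t - t + 1 →
      p * ε ^ 2 / 4 ≤ q * Real.log q - q * Real.log p - q + p := by
    intro t ht h1 h2
    have h3 := gibbs_nonneg (mul_pos ht hp) hq
    rw [Real.log_mul ht.ne' hp.ne'] at h3
    have h4 := mul_le_mul_of_nonneg_left h2 hp.le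
    linarith
  rcases lt_or_ge ((1 - ε) * p) q with h1 | h1
  · have h2 : (1 + ε) * p ≤ q := not_lt.1 fun h2 => h ⟨h1, h2⟩
    refine step (1 + ε) (by linarith) ?_ ?_
    · exact mul_le_mul_of_nonneg_right h2 (Real.log_nonneg (by linarith))
    · have h5 := Real.le_log_one_add_of_nonneg hε.le
      have h6 := mul_le_mul_of_nonneg_left h5 (by linarith : 0 ≤ 1 + ε)
      have h7 : (1 + ε) * (2 * ε / (ε + 2)) = ε + ε ^ 2 / (ε + 2) := by field_simp; ring
      have h8 : ε ^ 2 / 4 ≤ ε ^ 2 / (ε + 2) := by gcongr; linarith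
      linarith
  · refine step (1 - ε) (by linarith) ?_ ?_
    · exact mul_le_mul_of_nonpos_right h1 (Real.log_nonpos (by linarith) (by linarith))
    · have h5 := (abs_le.1 (Real.abs_log_sub_add_sum_range_le
        (by rw [abs_of_pos hε]; linarith : |ε| < 1) 2)).1
      simp only [Finset.sum_range_succ, Finset.sum_range_zero, abs_of_pos hε] at h5
      norm_num at h5
      have h9 : 0 < 1 - ε := by linarith
      have h6 := mul_le_mul_of_nonneg_left h5 h9.le
      have h7 : (1 - ε) * -(ε ^ 3 / (1 - ε)) = - ε ^ 3 := by field_simp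
      rw [h7] at h6
      nlinarith [sq_nonneg ε]

/-- Binary entropy lies below its tangent line at `p`, with a gap of at least the Poisson
divergence of `q` from `p`. -/
theorem ent_le {p q : ℝ} (hp1 : p < 1) (hq : 0 ≤ q) (hq1 : q ≤ 1) :
    Real.negMulLog q + Real.negMulLog (1 - q) ≤
      -q * Real.log p - (1 - q) * Real.log (1 - p) -
        (q * Real.log q - q * Real.log p - q + p) := by
  have key : (1 - q) * Real.log (1 - p) - (1 - q) * Real.log (1 - q) ≤ q - p := by
    rcases eq_or_lt_of_le hq1 with rfl | hq1
    · simp; linarith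
    · have h1 : 0 < 1 - q := by linarith
      have h2 : 0 < 1 - p := by linarith
      rw [← mul_sub, ← Real.log_div h2.ne' h1.ne']
      have := Real.log_le_sub_one_of_pos (div_pos h2 h1)
      have h3 := mul_le_mul_of_nonneg_left this h1.le
      have h4 : (1 - q) * ((1 - p) / (1 - q) - 1) = q - p := by field_simp; ring
      linarith
  simp only [Real.negMulLog]
  linarith

/-! ### The size of a binomial coefficient -/

/-- Among the `n + 1` terms of the binomial expansion of `(r + (n - r)) ^ n`, the one of index `r`
is the largest. -/
theorem pow_self_le_choose (n r : ℕ) (hr : r ≤ n) :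
    n ^ n ≤ (n + 1) * (n.choose r * (r ^ r * (n - r) ^ (n - r))) := by
  obtain ⟨m, rfl⟩ := Nat.exists_eq_add_of_le hr
  set t : ℕ → ℕ := fun j => r ^ j * m ^ (r + m - j) * (r + m).choose j with ht
  have hpow : ∀ j, j < r + m → m ^ (r + m - j) = m * m ^ (r + m - (j + 1)) := by
    intro j hj
    rw [← pow_succ']
    congr 1
    omega
  have up : ∀ j, j < r → t j ≤ t (j + 1) := by
    intro j hj
    have h1 : (r + m).choose j * m ≤ (r + m).choose (j + 1) * r := by
      refine Nat.le_of_mul_le_mul_right ?_ (by omega : 0 < j + 1)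
      have h2 := Nat.choose_succ_right_eq (r + m) j
      calc (r + m).choose j * m * (j + 1) = (r + m).choose j * (m * (j + 1)) := by ring
        _ ≤ (r + m).choose j * ((r + m - j) * r) := by
            gcongr <;> omega
        _ = (r + m).choose (j + 1) * (j + 1) * r := by rw [h2]; ring
        _ = _ := by ring
    simp only [ht]
    rw [hpow j (by omega), pow_succ]
    calc _ = r ^ j * m ^ (r + m - (j + 1)) * ((r + m).choose j * m) := by ring
      _ ≤ r ^ j * m ^ (r + m - (j + 1)) * ((r + m).choose (j + 1) * r) := by gcongr
      _ = _ := by ring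
  have down : ∀ j, r ≤ j → j < r + m → t (j + 1) ≤ t j := by
    intro j hj hjm
    have h1 : (r + m).choose (j + 1) * r ≤ (r + m).choose j * m := by
      refine Nat.le_of_mul_le_mul_right ?_ (by omega : 0 < j + 1)
      have h2 := Nat.choose_succ_right_eq (r + m) j
      calc (r + m).choose (j + 1) * r * (j + 1) = (r + m).choose (j + 1) * (j + 1) * r := by ring
        _ = (r + m).choose j * ((r + m - j) * r) := by rw [h2]; ring
        _ ≤ (r + m).choose j * (m * (j + 1)) := by
            gcongr <;> omega
        _ = _ := by ring
    simp only [ht]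
    rw [hpow j hjm, pow_succ]
    calc _ = r ^ j * m ^ (r + m - (j + 1)) * ((r + m).choose (j + 1) * r) := by ring
      _ ≤ r ^ j * m ^ (r + m - (j + 1)) * ((r + m).choose j * m) := by gcongr
      _ = _ := by ring
  have up' : ∀ i, i ≤ r → t (r - i) ≤ t r := by
    intro i
    induction i with
    | zero => intro _; exact le_rfl
    | succ i ih =>
      intro hi
      refine le_trans (up _ (by omega)) ?_
      have := ih (by omega)
      rwa [show r - (i + 1) + 1 = r - i by omega]
  have down' : ∀ i, i ≤ m → t (r + i) ≤ t r := by
    intro i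
    induction i with
    | zero => intro _; exact le_rfl
    | succ i ih => intro hi; exact (down (r + i) (by omega) (by omega)).trans (ih (by omega))
  have all : ∀ j ∈ Finset.range (r + m + 1), t j ≤ t r := by
    intro j hj
    have hj := Finset.mem_range.1 hj
    rcases le_total j r with h | h
    · have := up' (r - j) (by omega)
      rwa [show r - (r - j) = j by omega] at this
    · have := down' (j - r) (by omega)
      rwa [show r + (j - r) = j by omega] at this
  calc (r + m) ^ (r + m) = ∑ j ∈ Finset.range (r + m + 1), t j := by rw [add_pow]; rfl
    _ ≤ (Finset.range (r + m + 1)).card • t r := Finset.sum_le_card_nsmul _ _ _ all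
    _ = _ := by
      simp only [ht, Finset.card_range, smul_eq_mul, Nat.add_sub_cancel_left]
      ring

/-- `n h(r / n) ≤ log (n + 1) + log (n choose r)`, where `h` is the binary entropy in nats. -/
theorem log_choose_lower (n r : ℕ) (hr0 : 0 < r) (hr : r < n) :
    -(r : ℝ) * Real.log ((r : ℝ) / n) - ((n : ℝ) - r) * Real.log (1 - (r : ℝ) / n) ≤
      Real.log (n + 1) + Real.log (n.choose r) := by
  have h := pow_self_le_choose n r hr.le
  have hn : (0 : ℝ) < n := by exact_mod_cast hr0.trans hr
  have hr0' : (0 : ℝ) < r := by exact_mod_cast hr0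
  have hnr : (0 : ℝ) < (n : ℝ) - r := by
    have : (r : ℝ) < n := by exact_mod_cast hr
    linarith
  have hc : (0 : ℝ) < n.choose r := by exact_mod_cast Nat.choose_pos hr.le
  have h' : (n : ℝ) ^ n ≤ (n + 1) * (n.choose r * (r ^ r * ((n : ℝ) - r) ^ (n - r))) := by
    have : ((n ^ n : ℕ) : ℝ) ≤ (((n + 1) * (n.choose r * (r ^ r * (n - r) ^ (n - r))) : ℕ) : ℝ) := by
      exact_mod_cast h
    push_cast [Nat.cast_sub hr.le] at this
    exact this
  have h2 := Real.log_le_log (by positivity) h'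
  rw [Real.log_mul (by positivity) (by positivity), Real.log_mul (by positivity) (by positivity),
    Real.log_mul (by positivity) (by positivity), Real.log_pow, Real.log_pow, Real.log_pow,
    Nat.cast_sub hr.le] at h2
  have h3 : 1 - (r : ℝ) / n = ((n : ℝ) - r) / n := by field_simp
  rw [h3, Real.log_div hr0'.ne' hn.ne', Real.log_div hnr.ne' hn.ne']
  linarith

/-! ### The second moment -/

/-- Second moment of `∑ (i, j) ∈ E, a i u * a j v` for independent uniform `u`, `v` when the `a i`
have pairwise correlations at most `P²`, and second moments at most `P² + P`. The terms of the
expanded square with a coinciding index contribute a lower order once `n P` and `n P²` are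
large. -/
theorem second_moment {V : Type*} {n : ℕ} (S : Finset V) (E : Finset (Fin n × Fin n)) (d : ℕ)
    (hd : 1 ≤ d) (hE1 : ∀ i, (E.filter fun e => e.1 = i).card = d)
    (hE2 : ∀ j, (E.filter fun e => e.2 = j).card = d)
    (a : Fin n → V → ℝ) (P : ℝ) (hP : 0 < P)
    (hM0 : ∀ i i', 0 ≤ ∑ u ∈ S, a i u * a i' u)
    (hM : ∀ i i', ∑ u ∈ S, a i u * a i' u ≤ S.card * (P ^ 2 + if i = i' then P else 0))
    (h8 : 8 ≤ n * P) (h8' : 8 ≤ n * P ^ 2) :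
    ∑ u ∈ S, ∑ v ∈ S, (∑ e ∈ E, a e.1 u * a e.2 v) ^ 2 ≤
      (S.card : ℝ) ^ 2 * (2 * (n : ℝ) ^ 2 * d ^ 2 * P ^ 4) := by
  have hcard : (E.card : ℝ) = n * d := by
    have : E.card = n * d := by
      rw [Finset.card_eq_sum_card_fiberwise (f := Prod.fst) (t := univ) (by intro x _; simp)]
      simp [hE1]
    exact_mod_cast this
  have e1 : ∑ u ∈ S, ∑ v ∈ S, (∑ e ∈ E, a e.1 u * a e.2 v) ^ 2 =
      ∑ e ∈ E, ∑ f ∈ E, (∑ u ∈ S, a e.1 u * a f.1 u) * (∑ v ∈ S, a e.2 v * a f.2 v) := by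
    simp only [sq, Finset.sum_mul_sum]
    calc _ = ∑ u ∈ S, ∑ e ∈ E, ∑ v ∈ S, ∑ f ∈ E, a e.1 u * a e.2 v * (a f.1 u * a f.2 v) :=
          Finset.sum_congr rfl fun u _ => Finset.sum_comm
      _ = ∑ u ∈ S, ∑ e ∈ E, ∑ f ∈ E, ∑ v ∈ S, a e.1 u * a e.2 v * (a f.1 u * a f.2 v) :=
          Finset.sum_congr rfl fun u _ => Finset.sum_congr rfl fun e _ => Finset.sum_comm
      _ = ∑ e ∈ E, ∑ u ∈ S, ∑ f ∈ E, ∑ v ∈ S, a e.1 u * a e.2 v * (a f.1 u * a f.2 v) :=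
          Finset.sum_comm
      _ = ∑ e ∈ E, ∑ f ∈ E, ∑ u ∈ S, ∑ v ∈ S, a e.1 u * a e.2 v * (a f.1 u * a f.2 v) :=
          Finset.sum_congr rfl fun e _ => Finset.sum_comm
      _ = _ := by
          refine Finset.sum_congr rfl fun e _ => Finset.sum_congr rfl fun f _ =>
            Finset.sum_congr rfl fun u _ => Finset.sum_congr rfl fun v _ => ?_
          ring
  have e2 : ∀ e ∈ E, ∑ f ∈ E, (P ^ 2 + if e.1 = f.1 then P else 0) *
      (P ^ 2 + if e.2 = f.2 then P else 0) = n * d * P ^ 4 + 2 * d * P ^ 3 + P ^ 2 := by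
    intro e he
    have t1 : ∑ f ∈ E, (if e.1 = f.1 then (1 : ℝ) else 0) = d := by
      rw [Finset.sum_boole, ← hE1 e.1]; simp [eq_comm]
    have t2 : ∑ f ∈ E, (if e.2 = f.2 then (1 : ℝ) else 0) = d := by
      rw [Finset.sum_boole, ← hE2 e.2]; simp [eq_comm]
    have t3 : ∑ f ∈ E, (if e = f then (1 : ℝ) else 0) = 1 := by
      rw [Finset.sum_ite_eq]; simp [he]
    calc _ = ∑ f ∈ E, (P ^ 4 + P ^ 3 * (if e.1 = f.1 then (1 : ℝ) else 0) +
            P ^ 3 * (if e.2 = f.2 then (1 : ℝ) else 0) + P ^ 2 * (if e = f then (1 : ℝ) else 0)) := by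
          refine Finset.sum_congr rfl fun f _ => ?_
          by_cases h1 : e.1 = f.1 <;> by_cases h2 : e.2 = f.2 <;> simp [h1, h2, Prod.ext_iff] <;> ring
      _ = _ := by
          simp only [Finset.sum_add_distrib, ← Finset.mul_sum, t1, t2, t3, Finset.sum_const,
            nsmul_eq_mul, hcard]
          ring
  rw [e1]
  have hd' : (1 : ℝ) ≤ d := by exact_mod_cast hd
  calc _ ≤ ∑ e ∈ E, ∑ f ∈ E, (S.card * (P ^ 2 + if e.1 = f.1 then P else 0)) *
      (S.card * (P ^ 2 + if e.2 = f.2 then P else 0)) := by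
        refine Finset.sum_le_sum fun e _ => Finset.sum_le_sum fun f _ => ?_
        exact mul_le_mul (hM _ _) (hM _ _) (hM0 _ _) ((hM0 _ _).trans (hM _ _))
    _ = (S.card : ℝ) ^ 2 * ∑ e ∈ E, ∑ f ∈ E, (P ^ 2 + if e.1 = f.1 then P else 0) *
      (P ^ 2 + if e.2 = f.2 then P else 0) := by
        simp only [Finset.mul_sum]
        refine Finset.sum_congr rfl fun e _ => Finset.sum_congr rfl fun f _ => ?_
        ring
    _ = (S.card : ℝ) ^ 2 * (n * d * (n * d * P ^ 4 + 2 * d * P ^ 3 + P ^ 2)) := by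
        rw [Finset.sum_congr rfl e2, Finset.sum_const, nsmul_eq_mul, hcard]
    _ ≤ _ := by
        refine mul_le_mul_of_nonneg_left ?_ (by positivity)
        have hn : (0 : ℝ) ≤ n := by positivity
        have k1 : 2 * d * P ^ 3 ≤ n * d * P ^ 4 / 4 := by
          have : d * P ^ 3 * 8 ≤ d * P ^ 3 * (n * P) := by gcongr
          nlinarith
        have k2 : P ^ 2 ≤ n * d * P ^ 4 / 8 := by
          have k3 : P ^ 2 * 8 ≤ P ^ 2 * (n * P ^ 2) := by gcongr
          have k4 : (n * P ^ 4) * 1 ≤ (n * P ^ 4) * d := by gcongr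
          nlinarith
        have : n * d * (n * d * P ^ 4 + 2 * d * P ^ 3 + P ^ 2) ≤ n * d * (2 * (n * d * P ^ 4)) := by
          gcongr
          have : 0 ≤ n * d * P ^ 4 := by positivity
          linarith
        nlinarith

theorem prS_nonneg {V : Type*} (S : Finset V) (P : V → Prop) : 0 ≤ prS S P := by
  unfold prS; positivity

theorem prS_le_one {V : Type*} (S : Finset V) (P : V → Prop) : prS S P ≤ 1 := by
  unfold prS
  exact div_le_one_of_le₀ (by exact_mod_cast Finset.card_filter_le _ _) (by positivity)

theorem prS_eq_sum {V : Type*} (S : Finset V) (P : V → Prop) :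
    prS S P = (∑ v ∈ S, if P v then (1 : ℝ) else 0) / S.card := by
  rw [prS, Finset.sum_boole]

/-! ### Entropy deficit and typical variables -/

section Vertices

set_option linter.unusedSectionVars false

variable {n ρ : ℕ} {A : Type*} [Fintype A] [DecidableEq A]

theorem alphaE_mul_log (a₀ : A) (S : Finset (Vtx n ρ A)) (i : Fin n) :
    alphaE a₀ S i * Real.log 2 =
      (∑ v ∈ S, (Real.negMulLog (qiW a₀ S i (Wp a₀ i v)) +
        Real.negMulLog (1 - qiW a₀ S i (Wp a₀ i v)))) / S.card := by
  have h := fiber_avg S (Wp a₀ (i : ℕ))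
    (fun c => fEnt (S.filter fun v => Wp a₀ (i : ℕ) v = c) fun v => Xb v i)
  have h' : alphaE a₀ S i = (∑ v ∈ S,
      fEnt (S.filter fun v' => Wp a₀ (i : ℕ) v' = Wp a₀ i v) fun v => Xb v i) / S.card := by
    rw [alphaE, cEnt]
    convert h
  rw [h', div_mul_eq_mul_div, Finset.sum_mul]
  congr 1
  refine Finset.sum_congr rfl fun v hv => ?_
  rw [fEnt_bool _ ⟨v, by simp [hv]⟩]
  simp only [qiW]

theorem sum_typ_eq (a₀ : A) (S : Finset (Vtx n ρ A)) (ε : ℝ) (i : Fin n) :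
    (∑ w : Pfx n A, if TypPfx a₀ S ε i w then prW a₀ S (i : ℕ) w else 0) =
      prS S fun v => TypPfx a₀ S ε i (Wp a₀ i v) := by
  rw [prS_eq_sum, ← fiber_avg S (Wp a₀ (i : ℕ)) fun w => if TypPfx a₀ S ε i w then (1 : ℝ) else 0]
  refine Finset.sum_congr rfl fun w _ => ?_
  simp only [prW, prS]
  split_ifs <;> simp

theorem tower_Wp (a₀ : A) (S : Finset (Vtx n ρ A)) (i : Fin n) (G : Vtx n ρ A → ℝ)
    (hG : ∀ v v', Wp a₀ (i : ℕ) v = Wp a₀ i v' → G v = G v') :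
    ∑ v ∈ S, G v * (if Xb v i = true then 1 else 0) =
      ∑ v ∈ S, G v * qiW a₀ S i (Wp a₀ i v) := by
  have := tower_sum S (Wp a₀ (i : ℕ)) (fun v => Xb v i = true) G hG
  simp only [qiW]
  convert this

theorem sum_Xb (v : Vtx n ρ A) : ∑ i : Fin n, (if Xb v i = true then (1 : ℝ) else 0) = ρ := by
  rw [Finset.sum_boole]
  have : (univ.filter fun i => Xb v i = true) = v.1.1 := by ext i; simp [Xb]
  rw [this, v.1.2]

/-- The sum of the conditional entropies `H(X_i | W_{i-1})` falls short of
`log (n + 1) + log (n choose ρ)` by an amount proportional to the expected number of atypical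
prefixes. The linear terms of the tangent-line bound add up to a constant because every vertex
chooses exactly `ρ` variables. -/
theorem sum_alphaE_le (a₀ : A) (S : Finset (Vtx n ρ A)) (hS : S.Nonempty) (hρ : 0 < ρ)
    (hρn : ρ < n) {ε : ℝ} (hε : 0 < ε) (hε1 : ε < 1 / 2) :
    (∑ i : Fin n, alphaE a₀ S i) * Real.log 2 ≤
      Real.log (n + 1) + Real.log (n.choose ρ) - (ρ : ℝ) / n * ε ^ 2 / 4 *
        ∑ i : Fin n, (1 - prS S fun v => TypPfx a₀ S ε i (Wp a₀ i v)) := by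
  have hn : (0 : ℝ) < n := by exact_mod_cast hρ.trans hρn
  have hρ' : (0 : ℝ) < ρ := by exact_mod_cast hρ
  set p : ℝ := (ρ : ℝ) / n with hp
  have hp0 : 0 < p := by positivity
  have hp1 : p < 1 := by rw [hp, div_lt_one hn]; exact_mod_cast hρn
  have hs : (0 : ℝ) < S.card := by exact_mod_cast Finset.card_pos.2 hS
  have hs0 : (S.card : ℝ) ≠ 0 := hs.ne'
  set q : Fin n → Vtx n ρ A → ℝ := fun i v => qiW a₀ S i (Wp a₀ i v) with hq
  set x : Fin n → Vtx n ρ A → ℝ := fun i v => if Xb v i = true then 1 else 0 with hx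
  set t : Fin n → Vtx n ρ A → ℝ := fun i v => if TypPfx a₀ S ε i (Wp a₀ i v) then 1 else 0 with ht
  have pt : ∀ i v, Real.negMulLog (q i v) + Real.negMulLog (1 - q i v) ≤
      -Real.log (1 - p) + (Real.log (1 - p) - Real.log p) * q i v
        - p * ε ^ 2 / 4 * (1 - t i v) := by
    intro i v
    have h0 : 0 ≤ q i v := prS_nonneg _ _
    have h1 : q i v ≤ 1 := prS_le_one _ _
    have h2 := ent_le hp1 h0 h1 (p := p)
    have h3 : p * ε ^ 2 / 4 * (1 - t i v) ≤
        q i v * Real.log (q i v) - q i v * Real.log p - q i v + p := by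
      by_cases h : TypPfx a₀ S ε i (Wp a₀ i v)
      · simpa [ht, h] using gibbs_nonneg hp0 h0
      · simpa [ht, h] using phi_lower hp0 h0 hε hε1 h
    linarith
  have hsum : ∀ i, alphaE a₀ S i * Real.log 2 ≤ -Real.log (1 - p) +
      (Real.log (1 - p) - Real.log p) * ((∑ v ∈ S, x i v) / S.card) -
        p * ε ^ 2 / 4 * (1 - prS S fun v => TypPfx a₀ S ε i (Wp a₀ i v)) := by
    intro i
    have h1 : ∑ v ∈ S, x i v = ∑ v ∈ S, q i v := by
      simpa only [one_mul] using tower_Wp a₀ S i (fun _ => 1) (fun _ _ _ => rfl)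
    rw [alphaE_mul_log, div_le_iff₀ hs, prS_eq_sum, h1]
    refine (Finset.sum_le_sum fun v _ => pt i v).trans (le_of_eq ?_)
    simp only [Finset.sum_add_distrib, Finset.sum_sub_distrib, ← Finset.mul_sum, Finset.sum_const,
      nsmul_eq_mul, ht]
    field_simp
  have hxs : ∑ i : Fin n, (∑ v ∈ S, x i v) / (S.card : ℝ) = ρ := by
    rw [← Finset.sum_div, Finset.sum_comm, Finset.sum_congr rfl fun v _ => sum_Xb v,
      Finset.sum_const, nsmul_eq_mul]
    field_simp
  have hl := log_choose_lower n ρ hρ hρn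
  rw [Finset.sum_mul]
  refine (Finset.sum_le_sum fun i _ => hsum i).trans ?_
  rw [Finset.sum_sub_distrib, Finset.sum_add_distrib, ← Finset.mul_sum, ← Finset.mul_sum, hxs,
    Finset.sum_const, nsmul_eq_mul, Finset.card_univ, Fintype.card_fin]
  linarith

/-- Under the entropy hypothesis at most `ε n` variables are atypical: the entropy deficit is at
most `14 ε₁ ρ log 2 < ρ ε⁴ / 8`, and each atypical variable costs more than `(ρ / n) ε³ / 4`. -/
theorem card_atypical_le (a₀ : A) (S : Finset (Vtx n ρ A)) (hS : S.Nonempty) (hρ : 0 < ρ)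
    (hρn : ρ < n) (hn2 : 2 ≤ n) {ε ε₁ : ℝ} (hε : 0 < ε) (hε1 : ε < 1 / 2) (hε₁ : 0 < ε₁)
    (hc : Real.logb 2 (Real.exp 1) / 8 * ε ^ 4 > 14 * ε₁)
    (hlog : Real.log (n + 1) ≤ 8 * Real.log 2 * ε₁ * ρ)
    (hent : (∑ i : Fin n, alphaE a₀ S i) ≥
      (1 - 6 * ε₁ / Real.logb 2 n) * Real.logb 2 (n.choose ρ)) :
    (((univ : Finset (Fin n)).filter fun i => ¬ TypVar a₀ S ε i).card : ℝ) ≤ ε * n := by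
  have hn : (0 : ℝ) < n := by exact_mod_cast hρ.trans hρn
  have hρ' : (0 : ℝ) < ρ := by exact_mod_cast hρ
  have hl2 : 0 < Real.log 2 := Real.log_pos (by norm_num)
  have hln : 0 < Real.log n := Real.log_pos (by exact_mod_cast hn2)
  have h1 := sum_alphaE_le a₀ S hS hρ hρn hε hε1
  have h2 := mul_le_mul_of_nonneg_right hent hl2.le
  have h3 : (1 - 6 * ε₁ / Real.logb 2 n) * Real.logb 2 (n.choose ρ) * Real.log 2 =
      Real.log (n.choose ρ) - 6 * Real.log 2 * ε₁ * (Real.log (n.choose ρ) / Real.log n) := by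
    simp only [Real.logb]; field_simp
  have h4 : Real.log (n.choose ρ) / Real.log n ≤ ρ := by
    rw [div_le_iff₀ hln, ← Real.log_pow]
    refine Real.log_le_log (by exact_mod_cast Nat.choose_pos hρn.le) ?_
    exact_mod_cast Nat.choose_le_pow n ρ
  have h5 := mul_le_mul_of_nonneg_left h4 (by positivity : 0 ≤ 6 * Real.log 2 * ε₁)
  have h6 : 112 * Real.log 2 * ε₁ < ε ^ 4 := by
    simp only [Real.logb, Real.log_exp] at hc
    have := mul_lt_mul_of_pos_left hc hl2
    have h7 : Real.log 2 * (1 / Real.log 2 / 8 * ε ^ 4) = ε ^ 4 / 8 := by field_simp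
    linarith
  have h8 : (ρ : ℝ) / n * ε ^ 2 / 4 *
      ∑ i : Fin n, (1 - prS S fun v => TypPfx a₀ S ε i (Wp a₀ i v)) ≤ ρ * ε ^ 4 / 8 := by
    have := mul_lt_mul_of_pos_left h6 hρ'
    linarith
  have h9 : ε * ((univ : Finset (Fin n)).filter fun i => ¬ TypVar a₀ S ε i).card ≤
      ∑ i : Fin n, (1 - prS S fun v => TypPfx a₀ S ε i (Wp a₀ i v)) := by
    calc _ = ∑ i ∈ (univ : Finset (Fin n)).filter fun i => ¬ TypVar a₀ S ε i, ε := by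
          rw [Finset.sum_const, nsmul_eq_mul, mul_comm]
      _ ≤ ∑ i ∈ (univ : Finset (Fin n)).filter fun i => ¬ TypVar a₀ S ε i,
          (1 - prS S fun v => TypPfx a₀ S ε i (Wp a₀ i v)) := by
          refine Finset.sum_le_sum fun i hi => ?_
          have := (Finset.mem_filter.1 hi).2
          rw [TypVar, sum_typ_eq, ge_iff_le, not_le] at this
          linarith
      _ ≤ _ := by
          refine Finset.sum_le_sum_of_subset_of_nonneg (Finset.filter_subset _ _) fun i _ _ => ?_
          linarith [prS_le_one S fun v => TypPfx a₀ S ε i (Wp a₀ i v)]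
  have h10 := (mul_le_mul_of_nonneg_left h9 (by positivity : 0 ≤ (ρ : ℝ) / n * ε ^ 2 / 4)).trans h8
  set m : ℝ := (((univ : Finset (Fin n)).filter fun i => ¬ TypVar a₀ S ε i).card : ℝ)
  have h11 : (ρ : ℝ) / n * ε ^ 2 / 4 * (ε * m) = (ρ * ε ^ 3 / (4 * n)) * m := by field_simp
  have h12 : (ρ : ℝ) * ε ^ 4 / 8 = (ρ * ε ^ 3 / (4 * n)) * (ε * n / 2) := by field_simp; norm_num
  rw [h11, h12] at h10
  have h13 := le_of_mul_le_mul_left h10 (by positivity)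
  have : 0 < ε * n := by positivity
  linarith

/-! ### Tested variables -/

/-- Real-valued indicator that `v` chooses `i` after a typical prefix, so that `I(u, v)` is
the sum of `tst i u * tst j v` over constraint edges `(i, j)` between typical variables. -/
noncomputable def tst (a₀ : A) (S : Finset (Vtx n ρ A)) (ε : ℝ) (i : Fin n) (v : Vtx n ρ A) : ℝ :=
  if TypPfx a₀ S ε i (Wp a₀ i v) ∧ Xb v i = true then 1 else 0

theorem tst_nonneg (a₀ : A) (S : Finset (Vtx n ρ A)) (ε : ℝ) (i : Fin n) (v : Vtx n ρ A) :
    0 ≤ tst a₀ S ε i v := by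
  unfold tst; split_ifs <;> norm_num

theorem tst_le_one (a₀ : A) (S : Finset (Vtx n ρ A)) (ε : ℝ) (i : Fin n) (v : Vtx n ρ A) :
    tst a₀ S ε i v ≤ 1 := by
  unfold tst; split_ifs <;> norm_num

theorem tst_eq (a₀ : A) (S : Finset (Vtx n ρ A)) (ε : ℝ) (i : Fin n) (v : Vtx n ρ A) :
    tst a₀ S ε i v = (if TypPfx a₀ S ε i (Wp a₀ i v) then 1 else 0) *
      (if Xb v i = true then 1 else 0) := by
  unfold tst; split_ifs <;> simp_all

theorem sum_mul_tst_le (a₀ : A) (S : Finset (Vtx n ρ A)) {ε : ℝ} (hε : 0 < ε) (i : Fin n)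
    (G : Vtx n ρ A → ℝ) (hG0 : ∀ v, 0 ≤ G v)
    (hG : ∀ v v', Wp a₀ (i : ℕ) v = Wp a₀ i v' → G v = G v') :
    ∑ v ∈ S, G v * tst a₀ S ε i v ≤ (1 + ε) * ((ρ : ℝ) / n) * ∑ v ∈ S, G v := by
  have h := tower_Wp a₀ S i
    (fun v => G v * if TypPfx a₀ S ε i (Wp a₀ i v) then 1 else 0)
    (fun v v' h => by rw [hG v v' h, h])
  simp only [tst_eq, ← mul_assoc]
  rw [h, Finset.mul_sum]
  refine Finset.sum_le_sum fun v _ => ?_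
  have hP : 0 ≤ (1 + ε) * ((ρ : ℝ) / n) := by positivity
  split_ifs with ht
  · rw [mul_one, mul_comm]
    exact mul_le_mul_of_nonneg_right ht.2.le (hG0 v)
  · simpa using mul_nonneg hP (hG0 v)

theorem sum_tst_ge (a₀ : A) (S : Finset (Vtx n ρ A)) {ε : ℝ} (hε1 : ε < 1)
    (i : Fin n) (hi : TypVar a₀ S ε i) :
    (1 - ε) ^ 2 * ((ρ : ℝ) / n) * S.card ≤ ∑ v ∈ S, tst a₀ S ε i v := by
  rw [TypVar, sum_typ_eq, prS_eq_sum] at hi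
  rcases S.eq_empty_or_nonempty with rfl | hS
  · simp
  have hs : (0 : ℝ) < S.card := by exact_mod_cast Finset.card_pos.2 hS
  rw [ge_iff_le, le_div_iff₀ hs] at hi
  have h := tower_Wp a₀ S i
    (fun v => if TypPfx a₀ S ε i (Wp a₀ i v) then 1 else 0)
    (fun v v' h => by rw [h])
  simp only [tst_eq]
  rw [h]
  have hp : 0 ≤ (1 - ε) * ((ρ : ℝ) / n) := mul_nonneg (by linarith) (by positivity)
  calc (1 - ε) ^ 2 * ((ρ : ℝ) / n) * S.card = (1 - ε) * ((ρ : ℝ) / n) * ((1 - ε) * S.card) := by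
        ring
    _ ≤ (1 - ε) * ((ρ : ℝ) / n) * ∑ v ∈ S, if TypPfx a₀ S ε i (Wp a₀ i v) then 1 else 0 :=
        mul_le_mul_of_nonneg_left hi hp
    _ ≤ _ := by
        rw [Finset.mul_sum]
        refine Finset.sum_le_sum fun v _ => ?_
        split_ifs with ht
        · rw [mul_one, one_mul]; exact ht.1.le
        · simp

/-- For `i < j` the event recorded by `tst i` is determined by the prefix before `j`. -/
theorem tst_measurable (a₀ : A) (S : Finset (Vtx n ρ A)) (ε : ℝ) {i j : Fin n} (hij : i < j)
    (v v' : Vtx n ρ A) (h : Wp a₀ (j : ℕ) v = Wp a₀ j v') :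
    tst a₀ S ε i v = tst a₀ S ε i v' := by
  have hX : ∀ k : Fin n, k < j → Xb v k = Xb v' k := by
    intro k hk
    have := congrFun (congrArg Prod.fst h) k
    simpa [Wp, hk] using this
  have hY : ∀ k : Fin n, k < j → Yv a₀ v k = Yv a₀ v' k := by
    intro k hk
    have := congrFun (congrArg Prod.snd h) k
    simpa [Wp, hk] using this
  have hW : Wp a₀ (i : ℕ) v = Wp a₀ i v' := by
    refine Prod.ext (funext fun k => ?_) (funext fun k => ?_)
    · simp only [Wp]
      split_ifs with hk
      · exact hX k (lt_trans hk hij)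
      · rfl
    · simp only [Wp]
      split_ifs with hk
      · exact hY k (lt_trans hk hij)
      · rfl
  rw [tst, tst, hW, hX i hij]

theorem sum_tst_le (a₀ : A) (S : Finset (Vtx n ρ A)) {ε : ℝ} (hε : 0 < ε) (i : Fin n) :
    ∑ v ∈ S, tst a₀ S ε i v ≤ S.card * ((1 + ε) * ((ρ : ℝ) / n)) := by
  have := sum_mul_tst_le a₀ S hε i (fun _ => 1) (fun _ => zero_le_one) (fun _ _ _ => rfl)
  simp only [one_mul, Finset.sum_const, nsmul_eq_mul, mul_one] at this
  linarith

/-- For distinct variables, condition on the prefix before the larger one, which determines the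
event of the smaller one. -/
theorem sum_tst_mul_tst_le (a₀ : A) (S : Finset (Vtx n ρ A)) {ε : ℝ} (hε : 0 < ε) (i i' : Fin n) :
    ∑ v ∈ S, tst a₀ S ε i v * tst a₀ S ε i' v ≤
      S.card * (((1 + ε) * ((ρ : ℝ) / n)) ^ 2 + if i = i' then (1 + ε) * ((ρ : ℝ) / n) else 0) := by
  have hP : 0 ≤ (1 + ε) * ((ρ : ℝ) / n) := by positivity
  have main : ∀ i i' : Fin n, i < i' → ∑ v ∈ S, tst a₀ S ε i v * tst a₀ S ε i' v ≤
      S.card * ((1 + ε) * ((ρ : ℝ) / n)) ^ 2 := by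
    intro i i' hlt
    refine (sum_mul_tst_le a₀ S hε i' _ (tst_nonneg a₀ S ε i)
      (fun v v' h => tst_measurable a₀ S ε hlt v v' h)).trans ?_
    have := mul_le_mul_of_nonneg_left (sum_tst_le a₀ S hε i) hP
    linarith
  rcases lt_trichotomy i i' with h | rfl | h
  · simpa [h.ne] using main i i' h
  · have h1 : ∑ v ∈ S, tst a₀ S ε i v * tst a₀ S ε i v ≤ ∑ v ∈ S, tst a₀ S ε i v :=
      Finset.sum_le_sum fun v _ =>
        mul_le_of_le_one_left (tst_nonneg _ _ _ _ _) (tst_le_one _ _ _ _ _)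
    refine (h1.trans (sum_tst_le a₀ S hε i)).trans ?_
    rw [if_pos rfl]
    gcongr
    nlinarith
  · simp only [h.ne', if_false, add_zero]
    rw [Finset.sum_congr rfl fun v _ => mul_comm _ _]
    exact main i' i h


/-! ### Violated tests -/

/-- Some label is used by at least a `1 / |A|` fraction of the vertices that test `i`. -/
theorem exists_plurality (a₀ : A) (S : Finset (Vtx n ρ A)) (ε : ℝ) (i : Fin n) :
    ∃ a : A, (∑ v ∈ S, tst a₀ S ε i v) / (Fintype.card A : ℝ) ≤
      ∑ v ∈ S, tst a₀ S ε i v * (if Yv a₀ v i = a then 1 else 0) := by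
  have : Nonempty A := ⟨a₀⟩
  have hA : (Fintype.card A : ℝ) ≠ 0 := by exact_mod_cast Fintype.card_ne_zero
  obtain ⟨a, -, ha⟩ := Finset.exists_le_of_sum_le (s := (univ : Finset A)) Finset.univ_nonempty
    (f := fun _ => (∑ v ∈ S, tst a₀ S ε i v) / (Fintype.card A : ℝ))
    (g := fun a => ∑ v ∈ S, tst a₀ S ε i v * (if Yv a₀ v i = a then 1 else 0)) (by
      rw [Finset.sum_comm, Finset.sum_const, nsmul_eq_mul, Finset.card_univ,
        mul_div_cancel₀ _ hA]
      refine le_of_eq (Finset.sum_congr rfl fun v _ => ?_)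
      rw [← Finset.mul_sum]
      simp)
  exact ⟨a, ha⟩

/-- An assignment violates at least `(η - 2ε) n d` ordered constraint pairs between variables
satisfying `T`, since each of the at most `ε n` other variables lies on `2d` ordered pairs. -/
theorem card_bad_ge (ψ : CSP n A) (d : ℕ) (E : Finset (Fin n × Fin n))
    (hE : E = (univ ×ˢ univ : Finset (Fin n × Fin n)).filter fun p => ψ.adj p.1 p.2)
    (hE1 : ∀ i, (E.filter fun e => e.1 = i).card = d)
    (hE2 : ∀ j, (E.filter fun e => e.2 = j).card = d)
    (τ : Fin n → A) (T : Fin n → Prop) {η ε : ℝ}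
    (hsat : (nSat ψ τ : ℝ) < (1 - η) * (nEdg ψ : ℝ))
    (hT : (((univ : Finset (Fin n)).filter fun i => ¬ T i).card : ℝ) ≤ ε * n) :
    (η - 2 * ε) * (n * d) ≤
      (E.filter fun e => T e.1 ∧ T e.2 ∧ ¬ ψ.rel e.1 e.2 (τ e.1) (τ e.2)).card := by
  have hcard : (E.card : ℝ) = n * d := by
    have : E.card = n * d := by
      rw [Finset.card_eq_sum_card_fiberwise (f := Prod.fst) (t := univ) (by intro x _; simp)]
      simp [hE1]
    exact_mod_cast this
  have hedg : (nEdg ψ : ℝ) = n * d := by rw [← hcard, hE]; rfl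
  set M := (univ : Finset (Fin n)).filter fun i => ¬ T i with hM
  set F1 := E.filter fun e => ¬ T e.1
  set F2 := E.filter fun e => ¬ T e.2
  set Sa := E.filter fun e => ψ.rel e.1 e.2 (τ e.1) (τ e.2) with hSa
  set B := E.filter fun e => T e.1 ∧ T e.2 ∧ ¬ ψ.rel e.1 e.2 (τ e.1) (τ e.2)
  have h1 : F1.card ≤ M.card * d := by
    rw [Finset.card_eq_sum_card_fiberwise (f := Prod.fst) (t := M)
      (by intro x hx; simpa [M] using (Finset.mem_filter.1 hx).2)]
    refine (Finset.sum_le_card_nsmul _ _ d fun i _ => ?_).trans (by simp)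
    rw [← hE1 i]
    exact Finset.card_le_card (Finset.filter_subset_filter _ (Finset.filter_subset _ _))
  have h2 : F2.card ≤ M.card * d := by
    rw [Finset.card_eq_sum_card_fiberwise (f := Prod.snd) (t := M)
      (by intro x hx; simpa [M] using (Finset.mem_filter.1 hx).2)]
    refine (Finset.sum_le_card_nsmul _ _ d fun i _ => ?_).trans (by simp)
    rw [← hE2 i]
    exact Finset.card_le_card (Finset.filter_subset_filter _ (Finset.filter_subset _ _))
  have h3 : Sa.card = nSat ψ τ := by
    rw [nSat, hSa, hE, Finset.filter_filter]
  have h4 : E.card ≤ ((Sa.card + B.card) + F1.card) + F2.card := by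
    have : E ⊆ ((Sa ∪ B) ∪ F1) ∪ F2 := by
      intro e he
      simp only [Sa, B, F1, F2, Finset.mem_union, Finset.mem_filter]
      tauto
    refine (Finset.card_le_card this).trans ((Finset.card_union_le _ _).trans ?_)
    gcongr
    refine (Finset.card_union_le _ _).trans ?_
    gcongr
    exact Finset.card_union_le _ _
  have h4' : (n : ℝ) * d ≤ nSat ψ τ + B.card + M.card * d + M.card * d := by
    rw [← hcard, ← h3]
    exact_mod_cast h4.trans (by gcongr)
  rw [hedg] at hsat
  have h5 : (M.card : ℝ) * d ≤ ε * n * d := by gcongr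
  linarith

/-- The Paley–Zygmund step: `W u v`, the number of violated tests in which both vertices use
the plurality labels, vanishes on adjacent pairs, has a large mean, and is dominated by a variable
with small second moment. -/
theorem den_le (ψ : CSP n A) (d : ℕ) (hd : 1 ≤ d) (hreg : Regular ψ d) {η ε : ℝ}
    (hε : 0 < ε) (hε1 : ε < 1 / 2) (hεη : ε < η / 2)
    (hsat : ∀ τ : Fin n → A, (nSat ψ τ : ℝ) < (1 - η) * (nEdg ψ : ℝ))
    (a₀ : A) (S : Finset (Vtx n ρ A)) (hS : S.Nonempty) (hn0 : 0 < n) (h8 : 8 ≤ ρ)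
    (h8' : 8 * n ≤ ρ ^ 2)
    (hT : (((univ : Finset (Fin n)).filter fun i => ¬ TypVar a₀ S ε i).card : ℝ) ≤ ε * n) :
    2 * ((η / 2 - ε) * (1 / (Fintype.card A : ℝ) ^ 2) * (1 - ε) ^ 4 / (1 + ε) ^ 2) ^ 2 ≤
      1 - den ψ S := by
  have : Nonempty A := ⟨a₀⟩
  have hn : (0 : ℝ) < n := by exact_mod_cast hn0
  have hρ : (0 : ℝ) < ρ := by exact_mod_cast (by omega : 0 < ρ)
  have hd' : (0 : ℝ) < d := by exact_mod_cast hd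
  have hA : (0 : ℝ) < Fintype.card A := by exact_mod_cast Fintype.card_pos
  have hs : (0 : ℝ) < S.card := by exact_mod_cast Finset.card_pos.2 hS
  set p : ℝ := (ρ : ℝ) / n with hp
  have hp0 : 0 < p := by positivity
  set E := (univ ×ˢ univ : Finset (Fin n × Fin n)).filter fun p => ψ.adj p.1 p.2 with hE
  have hE1 : ∀ i, (E.filter fun e => e.1 = i).card = d := by
    intro i
    rw [← hreg i]
    refine Finset.card_nbij' Prod.snd (fun j => (i, j)) ?_ ?_ ?_ ?_
    · rintro ⟨a, b⟩ h; simp [E] at h ⊢; obtain ⟨h1, rfl⟩ := h; exact h1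
    · intro b h; simp [E] at h ⊢; exact h
    · rintro ⟨a, b⟩ h; simp at h ⊢; exact h.2.symm
    · intro b h; rfl
  have hE2 : ∀ i, (E.filter fun e => e.2 = i).card = d := by
    intro i
    rw [← hreg i]
    refine Finset.card_nbij' Prod.fst (fun j => (j, i)) ?_ ?_ ?_ ?_
    · rintro ⟨a, b⟩ h; simp [E] at h ⊢; obtain ⟨h1, rfl⟩ := h; exact ψ.symm h1
    · intro b h; simp [E] at h ⊢; exact ψ.symm h
    · rintro ⟨a, b⟩ h; simp at h ⊢; exact h.2.symm
    · intro b h; rfl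
  choose τ hτ using exists_plurality a₀ S ε
  set B := E.filter fun e => TypVar a₀ S ε e.1 ∧ TypVar a₀ S ε e.2 ∧
    ¬ ψ.rel e.1 e.2 (τ e.1) (τ e.2) with hB
  have hBcard : (η - 2 * ε) * (n * d) ≤ B.card :=
    card_bad_ge ψ d E hE hE1 hE2 τ (TypVar a₀ S ε) (hsat τ) hT
  set a : Fin n → Vtx n ρ A → ℝ := tst a₀ S ε with ha
  set b : Fin n → Vtx n ρ A → ℝ := fun i v => a i v * (if Yv a₀ v i = τ i then 1 else 0) with hb
  have ha0 : ∀ i v, 0 ≤ a i v := fun i v => tst_nonneg _ _ _ _ _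
  have hb0 : ∀ i v, 0 ≤ b i v := fun i v => mul_nonneg (ha0 i v) (by split_ifs <;> norm_num)
  have hba : ∀ i v, b i v ≤ a i v := fun i v =>
    mul_le_of_le_one_right (ha0 i v) (by split_ifs <;> norm_num)
  set W : Vtx n ρ A → Vtx n ρ A → ℝ := fun u v => ∑ e ∈ B, b e.1 u * b e.2 v with hW
  have hW0 : ∀ u v, 0 ≤ W u v := fun u v =>
    Finset.sum_nonneg fun e _ => mul_nonneg (hb0 _ _) (hb0 _ _)
  have hWI : ∀ u v, W u v ≤ ∑ e ∈ E, a e.1 u * a e.2 v := fun u v =>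
    (Finset.sum_le_sum fun e _ => mul_le_mul (hba _ _) (hba _ _) (hb0 _ _) (ha0 _ _)).trans
      (Finset.sum_le_sum_of_subset_of_nonneg (Finset.filter_subset _ _)
        fun e _ _ => mul_nonneg (ha0 _ _) (ha0 _ _))
  have hb_ne : ∀ i v, b i v ≠ 0 → ∃ h : i ∈ v.1.1, v.2 ⟨i, h⟩ = τ i := by
    intro i v h
    have h1 := left_ne_zero_of_mul h
    have h2 := right_ne_zero_of_mul h
    have h3 : Xb v i = true := by
      by_contra h3
      simp [ha, tst, h3] at h1
    have h4 : Yv a₀ v i = τ i := by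
      by_contra h4
      simp [h4] at h2
    have h5 : i ∈ v.1.1 := by simpa [Xb] using h3
    exact ⟨h5, by rw [← h4, Yv, dif_pos h5]⟩
  have hWadj : ∀ u v, PAdj ψ u v → W u v = 0 := by
    intro u v h
    refine Finset.sum_eq_zero fun e he => ?_
    by_contra hne
    obtain ⟨hu, hu'⟩ := hb_ne _ _ (left_ne_zero_of_mul hne)
    obtain ⟨hv, hv'⟩ := hb_ne _ _ (right_ne_zero_of_mul hne)
    obtain ⟨he1, -, -, he2⟩ := Finset.mem_filter.1 he
    have hadj : ψ.adj e.1 e.2 := (Finset.mem_filter.1 he1).2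
    have := h.2.2.2 e.1 e.2 hu hv hadj
    rw [hu', hv'] at this
    exact he2 this
  set L : ℝ := (1 - ε) ^ 2 * p * S.card / Fintype.card A with hL
  have hL0 : 0 ≤ L := by positivity
  have hbL : ∀ i, TypVar a₀ S ε i → L ≤ ∑ v ∈ S, b i v := fun i hi =>
    (div_le_div_of_nonneg_right (sum_tst_ge a₀ S (by linarith) i hi) hA.le).trans (hτ i)
  have hEW : (η - 2 * ε) * (n * d) * L ^ 2 ≤ ∑ u ∈ S, ∑ v ∈ S, W u v := by
    have e1 : ∑ u ∈ S, ∑ v ∈ S, W u v = ∑ e ∈ B, (∑ u ∈ S, b e.1 u) * ∑ v ∈ S, b e.2 v := by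
      simp only [hW, Finset.sum_mul_sum]
      calc _ = ∑ u ∈ S, ∑ e ∈ B, ∑ v ∈ S, b e.1 u * b e.2 v :=
            Finset.sum_congr rfl fun u _ => Finset.sum_comm
        _ = _ := Finset.sum_comm
    rw [e1]
    calc _ ≤ (B.card : ℝ) * L ^ 2 := by gcongr
      _ = ∑ e ∈ B, L * L := by rw [Finset.sum_const, nsmul_eq_mul, sq]
      _ ≤ _ := by
        refine Finset.sum_le_sum fun e he => ?_
        obtain ⟨-, h1, h2, -⟩ := Finset.mem_filter.1 he
        exact mul_le_mul (hbL _ h1) (hbL _ h2) hL0 (hL0.trans (hbL _ h1))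
  set P : ℝ := (1 + ε) * p with hP
  have hP0 : 0 < P := by positivity
  have hpP : p ≤ P := by rw [hP]; nlinarith
  have hsec : ∑ u ∈ S, ∑ v ∈ S, (∑ e ∈ E, a e.1 u * a e.2 v) ^ 2 ≤
      (S.card : ℝ) ^ 2 * (2 * (n : ℝ) ^ 2 * d ^ 2 * P ^ 4) := by
    refine second_moment S E d hd hE1 hE2 a P hP0
      (fun i i' => Finset.sum_nonneg fun v _ => mul_nonneg (ha0 _ _) (ha0 _ _))
      (fun i i' => sum_tst_mul_tst_le a₀ S hε i i') ?_ ?_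
    · calc (8 : ℝ) ≤ ρ := by exact_mod_cast h8
        _ = n * p := by rw [hp]; field_simp
        _ ≤ n * P := by gcongr
    · calc (8 : ℝ) ≤ ρ ^ 2 / n := by rw [le_div_iff₀ hn]; exact_mod_cast h8'
        _ = n * p ^ 2 := by rw [hp]; field_simp
        _ ≤ n * P ^ 2 := by gcongr
  set K : ℝ := (((S ×ˢ S).filter fun q => ¬ PAdj ψ q.1 q.2).card : ℝ) with hK
  have hden : 1 - den ψ S = K / (S.card : ℝ) ^ 2 := by
    have h1 : ((S ×ˢ S).filter fun q => PAdj ψ q.1 q.2).card +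
        ((S ×ˢ S).filter fun q => ¬ PAdj ψ q.1 q.2).card = S.card * S.card := by
      rw [Finset.card_filter_add_card_filter_not, Finset.card_product]
    have h2 : (((S ×ˢ S).filter fun q => PAdj ψ q.1 q.2).card : ℝ) + K = S.card * S.card := by
      rw [hK]; exact_mod_cast h1
    rw [den, eq_div_iff (by positivity), sub_mul, div_mul_cancel₀ _ (by positivity)]
    linarith
  have hCS : (∑ u ∈ S, ∑ v ∈ S, W u v) ^ 2 ≤
      K * ((S.card : ℝ) ^ 2 * (2 * (n : ℝ) ^ 2 * d ^ 2 * P ^ 4)) := by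
    have h1 := Finset.sum_mul_sq_le_sq_mul_sq (S ×ˢ S)
      (fun q => if PAdj ψ q.1 q.2 then (0 : ℝ) else 1) (fun q => W q.1 q.2)
    have h2 : ∑ q ∈ S ×ˢ S, (if PAdj ψ q.1 q.2 then (0 : ℝ) else 1) * W q.1 q.2 =
        ∑ u ∈ S, ∑ v ∈ S, W u v := by
      rw [Finset.sum_product]
      refine Finset.sum_congr rfl fun u _ => Finset.sum_congr rfl fun v _ => ?_
      split_ifs with h
      · simp [hWadj u v h]
      · simp
    have h3 : ∑ q ∈ S ×ˢ S, (if PAdj ψ q.1 q.2 then (0 : ℝ) else 1) ^ 2 = K := by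
      rw [hK, ← Finset.sum_boole]
      refine Finset.sum_congr rfl fun q _ => ?_
      by_cases h : PAdj ψ q.1 q.2 <;> simp [h]
    rw [h2, h3] at h1
    refine h1.trans (mul_le_mul_of_nonneg_left ?_ (by positivity))
    rw [Finset.sum_product]
    refine le_trans (Finset.sum_le_sum fun u _ => Finset.sum_le_sum fun v _ => ?_) hsec
    exact pow_le_pow_left₀ (hW0 u v) (hWI u v) 2
  have hη0 : 0 ≤ η - 2 * ε := by linarith
  have hfin := (pow_le_pow_left₀ (by positivity) hEW 2).trans hCS
  rw [hden, le_div_iff₀ (by positivity)]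
  have hQ : 0 < (S.card : ℝ) ^ 2 * (2 * (n : ℝ) ^ 2 * d ^ 2 * P ^ 4) := by positivity
  refine le_of_mul_le_mul_right (le_trans (le_of_eq ?_) hfin) hQ
  rw [hL, hP]
  field_simp

end Vertices

/-! ### Asymptotics of `rho` -/

theorem eventually_large {c : ℝ} (hc : 0 < c) : ∃ n₀ : ℕ, ∀ n ≥ n₀,
    2 ≤ n ∧ rho n < n ∧ 8 ≤ rho n ∧ 8 * n ≤ rho n ^ 2 ∧ Real.log (n + 1) ≤ c * rho n := by
  have hl2 : 0 < Real.log 2 := Real.log_pos (by norm_num)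
  have ho := isLittleO_log_rpow_atTop (r := 1 / 2) (by norm_num)
  have h1 := (ho.comp_tendsto tendsto_natCast_atTop_atTop).bound (half_pos hc)
  have h2 := (ho.comp_tendsto tendsto_natCast_atTop_atTop).bound
    (by positivity : 0 < Real.log 2 ^ 2 / 4)
  obtain ⟨n₀, hn₀⟩ := Filter.eventually_atTop.1 (h1.and (h2.and (Filter.eventually_ge_atTop 256)))
  refine ⟨n₀, fun n hn => ?_⟩
  obtain ⟨h1, h2, h256⟩ := hn₀ n hn
  have hn256 : (256 : ℝ) ≤ n := by exact_mod_cast h256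
  have hn0 : (0 : ℝ) < n := by linarith
  have hln : 0 ≤ Real.log n := Real.log_nonneg (by linarith)
  simp only [Function.comp, Real.norm_eq_abs, abs_of_nonneg hln, ← Real.sqrt_eq_rpow,
    abs_of_nonneg (Real.sqrt_nonneg _)] at h1 h2
  have hsq : Real.sqrt n * Real.sqrt n = n := Real.mul_self_sqrt hn0.le
  have hs16 : 16 ≤ Real.sqrt n := by
    rw [show (16 : ℝ) = Real.sqrt 256 by
      rw [show (256 : ℝ) = 16 ^ 2 by norm_num, Real.sqrt_sq (by norm_num)]]
    exact Real.sqrt_le_sqrt hn256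
  have hlog8 : 8 ≤ Real.logb 2 n := by
    rw [Real.le_logb_iff_rpow_le (by norm_num) hn0]
    norm_num
    exact h256
  have hll3 : 3 ≤ Real.logb 2 (Real.logb 2 n) := by
    rw [Real.le_logb_iff_rpow_le (by norm_num) (by linarith)]
    norm_num
    exact hlog8
  have hllu : Real.logb 2 (Real.logb 2 n) ≤ Real.sqrt n / 4 := by
    have h3 := Real.log_le_sub_one_of_pos (by linarith : 0 < Real.logb 2 n)
    calc Real.logb 2 (Real.logb 2 n) = Real.log (Real.logb 2 n) / Real.log 2 := rfl
      _ ≤ Real.logb 2 n / Real.log 2 := by gcongr; linarith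
      _ = Real.log n / Real.log 2 ^ 2 := by rw [Real.logb]; field_simp
      _ ≤ (Real.log 2 ^ 2 / 4 * Real.sqrt n) / Real.log 2 ^ 2 := by gcongr
      _ = _ := by field_simp
  have hr1 : 3 * Real.sqrt n ≤ rho n := by
    refine le_trans ?_ (Nat.le_ceil _)
    nlinarith
  have hr2 : (rho n : ℝ) < n := by
    have := Nat.ceil_lt_add_one (by positivity : 0 ≤ Real.sqrt n * Real.logb 2 (Real.logb 2 n))
    have h3 : Real.sqrt n * Real.logb 2 (Real.logb 2 n) ≤ Real.sqrt n * (Real.sqrt n / 4) := by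
      gcongr
    have h4 : (rho n : ℝ) < Real.sqrt n * Real.logb 2 (Real.logb 2 n) + 1 := this
    nlinarith
  refine ⟨by omega, by exact_mod_cast hr2, ?_, ?_, ?_⟩
  · have : (8 : ℝ) ≤ rho n := by linarith
    exact_mod_cast this
  · have : (8 : ℝ) * n ≤ (rho n : ℝ) ^ 2 := by nlinarith
    exact_mod_cast this
  · calc Real.log (n + 1) ≤ Real.log ((n : ℝ) ^ 2) := by
          apply Real.log_le_log (by positivity); nlinarith
      _ = 2 * Real.log n := by rw [Real.log_pow]; norm_num
      _ ≤ 2 * (c / 2 * Real.sqrt n) := by gcongr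
      _ = c * Real.sqrt n := by ring
      _ ≤ c * rho n := by gcongr; linarith

/-- Lemma 4.20, 2CSP-violation bound: there is an absolute constant c > 0
(the constant from the second-moment bound on I(u,v)) such that, with
ε₆ = (η/2 − ε₅)·(1/|A|²)·(1−ε₅)⁴/(1+ε₅)² and ε₇ = 6ε₅ + c·ε₅², whenever δ < ε₆²/(d⁴(1+2ε₇))
and the other constraints on the constants hold, for all large n: if ψ is d-regular with
OPT(ψ) < 1 − η and Σ H(X_i | X_{<i}, Y_{<i}) ≥ (1 − 6ε₁/log₂ n)·log₂ k, then
den(S) < 1 − δ. -/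
theorem statement_15 :
    ∃ c > (0 : ℝ),
      ∀ (A : Type) [Fintype A] [DecidableEq A],
        2 ≤ Fintype.card A →
        ∀ (d : ℕ) (η ε₀ ε₁ ε₅ δ : ℝ),
          0 < η → 0 < ε₀ → ε₁ ≥ 5 * ε₀ → 0 < ε₅ → ε₅ < η / 2 →
          Real.logb 2 (Real.exp 1) / 8 * ε₅ ^ 4 > 14 * ε₁ →
          δ < ((η / 2 - ε₅) * (1 / (Fintype.card A : ℝ) ^ 2) *
                (1 - ε₅) ^ 4 / (1 + ε₅) ^ 2) ^ 2 /
              ((d : ℝ) ^ 4 * (1 + 2 * (6 * ε₅ + c * ε₅ ^ 2))) →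
          ∃ n₀ : ℕ, ∀ n ≥ n₀, ∀ ψ : CSP n A, Regular ψ d →
            (∀ τ : Fin n → A, (nSat ψ τ : ℝ) < (1 - η) * (nEdg ψ : ℝ)) →
            ∀ (a₀ : A) (S : Finset (Vtx n (rho n) A)),
              S.card = ⌊kprime n (Fintype.card A) ε₀⌋₊ →
              (∑ i : Fin n, alphaE a₀ S i) ≥
                (1 - 6 * ε₁ / Real.logb 2 n) * Real.logb 2 (kk n) →
              den ψ S < 1 - δ := by
  -- for large `n` the second moment of `I(u, v)` is at most twice the square of the upper bound
  -- on its mean, so any `c > 0` leaves enough room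
  refine ⟨1, one_pos, ?_⟩
  intro A _ _ hA d η ε₀ ε₁ ε δ hη hε₀ hε₁ hε hεη hc hδ
  have hε₁0 : 0 < ε₁ := by linarith
  have hl2 : 0 < Real.log 2 := Real.log_pos (by norm_num)
  obtain ⟨n₀, hn₀⟩ := eventually_large (by positivity : 0 < 8 * Real.log 2 * ε₁)
  refine ⟨n₀, fun n hn ψ hreg hsat a₀ S _ hent => ?_⟩
  obtain ⟨hn2, hρn, h8, h8', hlog⟩ := hn₀ n hn
  have hedg : 0 < (1 - η) * (nEdg ψ : ℝ) := lt_of_le_of_lt (Nat.cast_nonneg _) (hsat fun _ => a₀)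
  have hη1 : η < 1 := by
    by_contra h
    have := mul_nonpos_of_nonpos_of_nonneg (by linarith : 1 - η ≤ 0) (Nat.cast_nonneg (nEdg ψ))
    linarith
  have hε1 : ε < 1 / 2 := by linarith
  have hd : 1 ≤ d := by
    by_contra h
    have hd0 : d = 0 := by omega
    have : nEdg ψ = 0 := by
      rw [nEdg, Finset.card_eq_zero, Finset.filter_eq_empty_iff]
      rintro ⟨i, j⟩ - hij
      have h1 := hreg i
      rw [hd0, Finset.card_eq_zero, Finset.filter_eq_empty_iff] at h1
      exact h1 (Finset.mem_univ j) hij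
    rw [this] at hedg
    simp at hedg
  have hd' : (1 : ℝ) ≤ d := by exact_mod_cast hd
  have hA' : (1 : ℝ) ≤ Fintype.card A := by exact_mod_cast (by omega : 1 ≤ Fintype.card A)
  set κ : ℝ := (η / 2 - ε) * (1 / (Fintype.card A : ℝ) ^ 2) * (1 - ε) ^ 4 / (1 + ε) ^ 2 with hκ
  have hδκ : δ < κ ^ 2 := by
    refine lt_of_lt_of_le hδ (div_le_self (sq_nonneg _) ?_)
    have h1 : (1 : ℝ) ≤ (d : ℝ) ^ 4 := one_le_pow₀ hd'
    have h2 : (1 : ℝ) ≤ 1 + 2 * (6 * ε + 1 * ε ^ 2) := by nlinarith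
    nlinarith
  -- an empty `S` has `den ψ S = 0 / 0 = 0`, so there `δ < 1` suffices
  rcases S.eq_empty_or_nonempty with rfl | hS
  · have hη2 : 0 ≤ η / 2 - ε := by linarith
    have hε2 : 0 ≤ 1 - ε := by linarith
    have hκ0 : 0 ≤ κ := by positivity
    have hκ1 : κ ≤ 1 := by
      refine (div_le_self (by positivity) (one_le_pow₀ (by linarith))).trans ?_
      refine mul_le_one₀ (mul_le_one₀ (by linarith) (by positivity) ?_) (by positivity)
        (pow_le_one₀ hε2 (by linarith))
      rw [one_div]
      exact inv_le_one_of_one_le₀ (one_le_pow₀ hA')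
    have : κ ^ 2 ≤ 1 := pow_le_one₀ hκ0 hκ1
    simp only [den, Finset.card_empty, Nat.cast_zero]
    norm_num
    linarith
  · have hT := card_atypical_le a₀ S hS (by omega) hρn hn2 hε hε1 hε₁0 hc hlog hent
    have := den_le ψ d hd hreg hε hε1 hεη hsat a₀ S hS (by omega) h8 h8' hT
    nlinarith [sq_nonneg κ]
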